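/- For every integer n ≥ 1, every state T reachable from ₀(n) by Bergman moves, and every index i with T i ≥ 1, one has (i : ℝ) ≥ −(2n + log_φ n + 2). That is, the leftmost chip can never move more than 2n + log_φ n + 2 positions to the left of index 0. -/

import Mathlib

noncomputable section

/-- The golden ratio. -/
def phi : ℝ := (1 + Real.sqrt 5) / 2

/-- Base-φ logarithm. -/
def logphi (x : ℝ) : ℝ := Real.logb phi x

/-- A Bergman state: a finitely supported function from ℤ to ℕ. -/
abbrev BState := ℤ →₀ ℕ

/-- A split move at index `i`. -/
def SplitAt (S S' : BState) (i : ℤ) : Prop :=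
  2 ≤ S i ∧
    S' = S - Finsupp.single i 2 + Finsupp.single (i + 1) 1 + Finsupp.single (i - 2) 1

/-- A combine move at index `i`. -/
def CombineAt (S S' : BState) (i : ℤ) : Prop :=
  1 ≤ S i ∧ 1 ≤ S (i + 1) ∧
    S' = S - Finsupp.single i 1 - Finsupp.single (i + 1) 1 + Finsupp.single (i + 2) 1

/-- A move is a split or a combine. -/
def Move (S S' : BState) : Prop := (∃ i, SplitAt S S' i) ∨ (∃ i, CombineAt S S' i)

/-- Terminal state: no move is legal. -/
def Terminal (S : BState) : Prop :=
  (∀ i, S i ≤ 1) ∧ ∀ i, ¬(1 ≤ S i ∧ 1 ≤ S (i + 1))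

/-- A Bergman game of length `m` from `S`. -/
def Game (S : BState) (m : ℕ) (g : ℕ → BState) : Prop :=
  g 0 = S ∧ ∀ j < m, Move (g j) (g (j + 1))

/-- A complete Bergman game of length `m` from `S`. -/
def CompleteGame (S : BState) (m : ℕ) (g : ℕ → BState) : Prop :=
  Game S m g ∧ Terminal (g m)

/-- Reachability by a finite sequence of moves. -/
def Reachable : BState → BState → Prop := Relation.ReflTransGen Move

/-- Reachability by split moves only. -/
def SplitReachable : BState → BState → Prop :=
  Relation.ReflTransGen fun S S' => ∃ i, SplitAt S S' i

/-- The initial state `₀(n)`: `n` chips at index 0. -/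
def initState (n : ℕ) : BState := Finsupp.single 0 n

/-- Total number of chips in a state. -/
def chips (S : BState) : ℕ := S.sum fun _ c => c

open Classical in
/-- The number of split moves among the first `m` steps of `g`. -/
def splitCount (g : ℕ → BState) (m : ℕ) : ℕ :=
  ((Finset.range m).filter fun j => ∃ i, SplitAt (g j) (g (j + 1)) i).card

open Classical in
/-- The number of combine moves among the first `m` steps of `g`. -/
def combineCount (g : ℕ → BState) (m : ℕ) : ℕ :=
  ((Finset.range m).filter fun j => ∃ i, CombineAt (g j) (g (j + 1)) i).card

/-!
For a set of chips at indices at most `j`, let `y = ∑ φ ^ (i - j)` and `x = ∑ ψ ^ (i - j)`, the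
values it represents at the golden ratio and at its conjugate, seen from position `j`. They are
conjugate in `ℤ[φ]` and `y > 0`, so `1 ≤ |x| * y`. Sweep over the chips from left to right and
follow `(1 + y) / (1 + |x|)`: moving `j` one step to the right divides it by at least `φ`, while
picking up a chip at `j` changes `(x, y)` to `(x + 1, y + 1)` and multiplies it by at most `φ ^ 2`.
Thus a chip far to the left of `0` forces `|x|` to be large at `j = 0` unless there are many chips.
On the other hand moves preserve the conjugate value and never create chips, which bounds `|x|`.
-/

open Finsupp Real
open scoped goldenRatio

theorem zpow_eq_intFib_add_mul {K : Type*} [Field K] {β : K} (hβ : β ^ 2 = β + 1) (i : ℤ) :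
    β ^ i = Int.fib (i - 1) + Int.fib i * β := by
  have β_ne_zero : β ≠ 0 := by rintro rfl; simp at hβ
  have inv_eq : β⁻¹ = β - 1 := inv_eq_of_mul_eq_one_right (by linear_combination hβ)
  induction i with
  | zero => simp
  | succ i ih =>
    have fib_rec : Int.fib (i + 1) = Int.fib (i - 1) + Int.fib i := by
      simpa [show (i : ℤ) - 1 + 2 = i + 1 by ring] using Int.fib_add_two ((i : ℤ) - 1)
    rw [zpow_add_one₀ β_ne_zero, ih, add_sub_cancel_right, fib_rec]
    push_cast
    linear_combination (Int.fib i : K) * hβ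
  | pred i ih =>
    have fib_rec : Int.fib (-i) = Int.fib (-i - 1 - 1) + Int.fib (-i - 1) := by
      simpa [show -(i : ℤ) - 1 - 1 + 2 = -i by ring, show -(i : ℤ) - 1 - 1 + 1 = -i - 1 by ring]
        using Int.fib_add_two (-(i : ℤ) - 1 - 1)
    rw [zpow_sub_one₀ β_ne_zero, ih, inv_eq, fib_rec]
    push_cast
    linear_combination (Int.fib (-i - 1 - 1) + Int.fib (-i - 1) : K) * hβ

theorem one_le_abs_add_mul_goldenConj_mul {a b : ℤ} (h : 0 < a + b * φ) :
    1 ≤ |a + b * ψ| * (a + b * φ) := by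
  have conj_ne_zero : a + b * ψ ≠ 0 := by
    rcases eq_or_ne b 0 with rfl | hb
    · simpa using h.ne'
    · exact ((goldenConj_irrational.intCast_mul hb).intCast_add a).ne_zero
  have norm_eq : (a + b * ψ) * (a + b * φ) = (a ^ 2 + a * b - b ^ 2 : ℤ) := by
    push_cast
    linear_combination (a * b : ℝ) * goldenRatio_add_goldenConj +
      (b ^ 2 : ℝ) * goldenRatio_mul_goldenConj
  have norm_ne_zero : a ^ 2 + a * b - b ^ 2 ≠ 0 := by
    rw [← Int.cast_ne_zero (α := ℝ), ← norm_eq]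
    exact mul_ne_zero conj_ne_zero h.ne'
  calc (1 : ℝ) ≤ |((a ^ 2 + a * b - b ^ 2 : ℤ) : ℝ)| := mod_cast Int.one_le_abs norm_ne_zero
    _ = |a + b * ψ| * (a + b * φ) := by rw [← norm_eq, abs_mul, abs_of_pos h]

theorem goldenRatio_le_of_add_one_le_sq {q : ℝ} (hq : 0 ≤ q) (h : q + 1 ≤ q ^ 2) : φ ≤ q := by
  nlinarith [goldenRatio_sq, one_lt_goldenRatio]

theorem add_one_mul_add_one_le_goldenRatio_sq_mul {p q : ℝ} (hp : 0 < p) (hq : 0 < q)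
    (hpq : p + 1 ≤ p * q) (hqp : q + 1 ≤ p * q) : (p + 1) * (q + 1) ≤ φ ^ 2 * (p * q) := by
  wlog hle : p ≤ q generalizing p q
  · simpa only [mul_comm] using
      this hq hp (mul_comm p q ▸ hqp) (mul_comm p q ▸ hpq) (le_of_not_ge hle)
  have φ_le_q : φ ≤ q := goldenRatio_le_of_add_one_le_sq hq.le (by nlinarith)
  have one_le : 1 ≤ (φ - 1) * q := by
    nlinarith [goldenRatio_sq, one_lt_goldenRatio]
  have scaled : 0 ≤ q * (φ * (p * q) - p - q - 1) := calc
    0 ≤ (q + 1) * ((φ - 1) * q - 1) := mul_nonneg (by positivity) (by linarith)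
    _ = (q + 1) * (φ * q - 1) - q * (q + 1) := by ring
    _ ≤ p * q * (φ * q - 1) - q * (q + 1) := by gcongr; nlinarith
    _ = q * (φ * (p * q) - p - q - 1) := by ring
  rw [goldenRatio_sq]
  linarith [nonneg_of_mul_nonneg_right scaled hq]

theorem one_add_div_one_add_gap_le {β u y : ℝ} (hβ : 1 ≤ β) (hu : 0 ≤ u) (huy : 1 ≤ u * y) :
    (1 + y / β) / (1 + β * u) ≤ (1 + y) / (1 + u) / β := by
  rw [div_div, div_le_div_iff₀ (by positivity) (by positivity)]
  have clear_denom : (1 + y / β) * ((1 + u) * β) = (β + y) * (1 + u) := by field_simp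
  rw [clear_denom]
  nlinarith [mul_nonneg (sub_nonneg.2 hβ) (sub_nonneg.2 huy)]

theorem one_add_div_one_add_abs_chip_le {x y : ℝ} (hy : 0 < y) (hxy : 1 ≤ |x| * y)
    (hxy' : 1 ≤ |x + 1| * (y + 1)) :
    (1 + (y + 1)) / (1 + |x + 1|) ≤ φ ^ 2 * ((1 + y) / (1 + |x|)) := by
  have two_le : 2 ≤ φ ^ 2 := by linarith [goldenRatio_sq, one_lt_goldenRatio]
  rw [mul_div_assoc', div_le_div_iff₀ (by positivity) (by positivity)]
  rcases le_or_gt 0 x with x_nonneg | x_neg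
  · rw [abs_of_nonneg x_nonneg, abs_of_nonneg (by linarith)]
    calc (1 + (y + 1)) * (1 + x) ≤ 2 * (1 + y) * (1 + (x + 1)) := by nlinarith
      _ ≤ φ ^ 2 * (1 + y) * (1 + (x + 1)) := by gcongr
  rw [abs_of_neg x_neg] at hxy ⊢
  rcases le_or_gt (-1) x with neg_one_le | lt_neg_one
  · rw [abs_of_nonneg (by linarith)] at hxy' ⊢
    calc (1 + (y + 1)) * (1 + -x) ≤ 2 * (1 + y) * (1 + (x + 1)) := by nlinarith
      _ ≤ φ ^ 2 * (1 + y) * (1 + (x + 1)) := by gcongr; linarith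
  · rw [abs_of_neg (by linarith)] at hxy' ⊢
    have main := add_one_mul_add_one_le_goldenRatio_sq_mul (p := y + 1) (q := -x) (by linarith)
      (by linarith) (by linarith) (by linarith)
    linarith

theorem chips_add (S T : BState) : chips (S + T) = chips S + chips T :=
  sum_add_index' (fun _ => rfl) (fun _ _ _ => rfl)

theorem chips_single (i : ℤ) (c : ℕ) : chips (single i c) = c :=
  sum_single_index rfl

theorem chips_pos {S : BState} (hS : S ≠ 0) : 0 < chips S := by
  obtain ⟨i, hi⟩ := support_nonempty_iff.2 hS
  exact Finset.sum_pos (fun k hk => Nat.pos_of_ne_zero (mem_support_iff.1 hk)) ⟨i, hi⟩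

namespace BState

/-- The real number that a state represents in base `β`, seen from position `j`: a chip at index
`i` counts `β ^ (i - j)`. The bases of interest are `φ` and `ψ`. -/
def eval (β : ℝ) (j : ℤ) (S : BState) : ℝ := S.sum fun i c => c * β ^ (i - j)

theorem eval_add (β : ℝ) (j : ℤ) (S T : BState) : eval β j (S + T) = eval β j S + eval β j T :=
  sum_add_index' (by simp) (by intros; push_cast; ring)

theorem eval_single (β : ℝ) (j i : ℤ) (c : ℕ) : eval β j (single i c) = c * β ^ (i - j) :=
  sum_single_index (by simp)

theorem eval_succ {β : ℝ} (hβ : β ≠ 0) (j : ℤ) (S : BState) :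
    eval β (j + 1) S = eval β j S / β := by
  simp only [eval, Finsupp.sum, Finset.sum_div]
  refine Finset.sum_congr rfl fun i _ => ?_
  rw [← sub_sub, zpow_sub_one₀ hβ, div_eq_mul_inv, mul_assoc]

theorem eval_pos {β : ℝ} (hβ : 0 < β) (j : ℤ) {S : BState} (hS : S ≠ 0) : 0 < eval β j S := by
  refine Finset.sum_pos (fun i hi => ?_) (support_nonempty_iff.2 hS)
  have : 0 < S i := Nat.pos_of_ne_zero (mem_support_iff.1 hi)
  positivity

theorem abs_eval_le_chips {β : ℝ} (hβ : |β| ≤ 1) {j : ℤ} {S : BState}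
    (hS : ∀ i ∈ S.support, j ≤ i) : |eval β j S| ≤ chips S := by
  calc |eval β j S| ≤ ∑ i ∈ S.support, |S i * β ^ (i - j)| := Finset.abs_sum_le_sum_abs _ _
    _ ≤ ∑ i ∈ S.support, (S i : ℝ) := by
        refine Finset.sum_le_sum fun i hi => ?_
        obtain ⟨d, hd⟩ := Int.eq_ofNat_of_zero_le (sub_nonneg.2 (hS i hi))
        rw [hd, zpow_natCast, abs_mul, Nat.abs_cast, abs_pow]
        exact mul_le_of_le_one_right (by positivity) (pow_le_one₀ (abs_nonneg β) hβ)
    _ = chips S := by simp [chips, Finsupp.sum]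

theorem exists_int_eval_eq (j : ℤ) (S : BState) :
    ∃ a b : ℤ, ∀ β : ℝ, β ^ 2 = β + 1 → eval β j S = a + b * β := by
  refine ⟨∑ i ∈ S.support, S i * Int.fib (i - j - 1), ∑ i ∈ S.support, S i * Int.fib (i - j),
    fun β hβ => ?_⟩
  push_cast
  rw [Finset.sum_mul, ← Finset.sum_add_distrib]
  refine Finset.sum_congr rfl fun i _ => ?_
  simp only [zpow_eq_intFib_add_mul hβ]
  ring

theorem one_le_abs_eval_goldenConj_mul_eval_goldenRatio (j : ℤ) {S : BState} (hS : S ≠ 0) :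
    1 ≤ |eval ψ j S| * eval φ j S := by
  obtain ⟨a, b, hab⟩ := exists_int_eval_eq j S
  have pos := eval_pos goldenRatio_pos j hS
  rw [hab φ goldenRatio_sq] at pos ⊢
  rw [hab ψ goldenConj_sq]
  exact one_le_abs_add_mul_goldenConj_mul pos

theorem abs_eval_goldenConj_succ (j : ℤ) (S : BState) :
    |eval ψ (j + 1) S| = φ * |eval ψ j S| := by
  rw [eval_succ goldenConj_ne_zero, div_eq_mul_inv, inv_goldenConj, abs_mul, abs_neg,
    abs_of_pos goldenRatio_pos, mul_comm]

/-- The quantity controlled while sweeping over a state from left to right; `S` is the part of the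
state met so far and `j` the current position. -/
def potential (j : ℤ) (S : BState) : ℝ := (1 + eval φ j S) / (1 + |eval ψ j S|)

theorem potential_single_self (j : ℤ) (c : ℕ) : potential j (single j c) = 1 := by
  have : (1 + c : ℝ) ≠ 0 := by positivity
  simp [potential, eval_single, this]

theorem potential_succ_le (j : ℤ) {S : BState} (hS : S ≠ 0) :
    potential (j + 1) S ≤ potential j S / φ := by
  rw [potential, abs_eval_goldenConj_succ, eval_succ goldenRatio_ne_zero]
  exact one_add_div_one_add_gap_le one_lt_goldenRatio.le (abs_nonneg _)
    (one_le_abs_eval_goldenConj_mul_eval_goldenRatio j hS)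

theorem potential_le_mul_zpow {j k : ℤ} (hjk : j ≤ k) {S : BState} (hS : S ≠ 0) :
    potential k S ≤ potential j S * φ ^ (j - k) := by
  induction k, hjk using Int.leInduction with
  | base => simp
  | succ k _ ih =>
    calc potential (k + 1) S ≤ potential k S / φ := potential_succ_le k hS
      _ ≤ potential j S * φ ^ (j - k) / φ := by gcongr
      _ = potential j S * φ ^ (j - (k + 1)) := by
          rw [← sub_sub, zpow_sub_one₀ goldenRatio_ne_zero, div_eq_mul_inv, mul_assoc]

theorem potential_add_single_one_le (j : ℤ) {S : BState} (hS : S ≠ 0) :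
    potential j (S + single j 1) ≤ φ ^ 2 * potential j S := by
  have hS' : S + single j 1 ≠ 0 := by simp [hS]
  have norm' := one_le_abs_eval_goldenConj_mul_eval_goldenRatio j hS'
  have eval_chip (β : ℝ) : eval β j (S + single j 1) = eval β j S + 1 := by
    simp [eval_add, eval_single]
  rw [eval_chip, eval_chip] at norm'
  rw [potential, eval_chip, eval_chip]
  exact one_add_div_one_add_abs_chip_le (eval_pos goldenRatio_pos j hS)
    (one_le_abs_eval_goldenConj_mul_eval_goldenRatio j hS) norm'

theorem potential_add_single_le (j : ℤ) {S : BState} (hS : S ≠ 0) (c : ℕ) :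
    potential j (S + single j c) ≤ φ ^ (2 * c) * potential j S := by
  induction c with
  | zero => simp
  | succ c ih =>
    have ne_zero : S + single j c ≠ 0 := by simp [hS]
    calc potential j (S + single j (c + 1)) = potential j (S + single j c + single j 1) := by
          rw [single_add, add_assoc]
      _ ≤ φ ^ 2 * potential j (S + single j c) := potential_add_single_one_le j ne_zero
      _ ≤ φ ^ 2 * (φ ^ (2 * c) * potential j S) := by gcongr
      _ = φ ^ (2 * (c + 1)) * potential j S := by ring

theorem potential_add_single_le_zpow {S : BState} (hS : S ≠ 0) {m a : ℤ}
    (h : potential a S ≤ φ ^ (2 * chips S - 2 - (a - m) : ℤ)) (c : ℕ) :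
    potential a (S + single a c) ≤ φ ^ (2 * chips (S + single a c) - 2 - (a - m) : ℤ) :=
  calc potential a (S + single a c) ≤ φ ^ (2 * c) * potential a S := potential_add_single_le a hS c
    _ ≤ φ ^ (2 * c) * φ ^ (2 * chips S - 2 - (a - m) : ℤ) := by gcongr
    _ = φ ^ (2 * chips (S + single a c) - 2 - (a - m) : ℤ) := by
        rw [← zpow_natCast, ← zpow_add₀ goldenRatio_ne_zero, chips_add, chips_single]
        congr 1
        push_cast
        ring

theorem potential_le_zpow_of_le {S : BState} (hS : S ≠ 0) {m a j : ℤ} (haj : a ≤ j)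
    (h : potential a S ≤ φ ^ (2 * chips S - 2 - (a - m) : ℤ)) :
    potential j S ≤ φ ^ (2 * chips S - 2 - (j - m) : ℤ) :=
  calc potential j S ≤ potential a S * φ ^ (a - j) := potential_le_mul_zpow haj hS
    _ ≤ φ ^ (2 * chips S - 2 - (a - m) : ℤ) * φ ^ (a - j) := by gcongr
    _ = φ ^ (2 * chips S - 2 - (j - m) : ℤ) := by
        rw [← zpow_add₀ goldenRatio_ne_zero]
        congr 1
        ring

theorem potential_le_zpow {S : BState} {m j : ℤ} (hm : m ∈ S.support)
    (hj : ∀ i ∈ S.support, i ≤ j) : potential j S ≤ φ ^ (2 * chips S - 2 - (j - m) : ℤ) := by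
  induction S using Finsupp.induction_on_max₂ generalizing m j with
  | zero => simp at hm
  | add_single a c S hlt hc ih =>
    have hmem {i : ℤ} : i ∈ (S + single a c).support ↔ i ∈ S.support ∨ i = a := by
      grind [Finsupp.add_apply]
    refine potential_le_zpow_of_le (by simp [hc]) (hj a (hmem.2 (.inr rfl))) ?_
    rcases eq_or_ne S 0 with rfl | hS
    · obtain rfl : m = a := by simpa using hmem.1 hm
      rw [zero_add, potential_single_self, chips_single]
      exact one_le_zpow₀ one_lt_goldenRatio.le (by omega)
    · obtain ⟨m', hm', m'_le⟩ : ∃ m' ∈ S.support, m' ≤ m := by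
        rcases hmem.1 hm with hmS | rfl
        · exact ⟨m, hmS, le_rfl⟩
        · obtain ⟨m', hm'⟩ := support_nonempty_iff.2 hS
          exact ⟨m', hm', (hlt m' hm').le⟩
      calc potential a (S + single a c)
          ≤ φ ^ (2 * chips (S + single a c) - 2 - (a - m') : ℤ) :=
            potential_add_single_le_zpow hS (ih hm' fun i hi => (hlt i hi).le) c
        _ ≤ φ ^ (2 * chips (S + single a c) - 2 - (a - m) : ℤ) :=
            zpow_le_zpow_right₀ one_lt_goldenRatio.le (by linarith)

theorem zpow_le_one_add_abs_eval_goldenConj {S : BState} {m j : ℤ} (hm : m ∈ S.support)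
    (hj : ∀ i ∈ S.support, i ≤ j) :
    φ ^ (j - m - (2 * chips S - 2) : ℤ) ≤ 1 + |eval ψ j S| := by
  have hS : S ≠ 0 := by rintro rfl; simp at hm
  have one_le : 1 ≤ φ ^ (2 * chips S - 2 - (j - m) : ℤ) * (1 + |eval ψ j S|) := calc
    1 ≤ 1 + eval φ j S := by linarith [eval_pos goldenRatio_pos j hS]
    _ ≤ _ := (div_le_iff₀ (by positivity)).1 (potential_le_zpow hm hj)
  rw [← neg_sub, zpow_neg, inv_le_iff_one_le_mul₀' (by positivity)]
  exact one_le

theorem zpow_le_abs_eval_goldenConj_add_chips {T : BState} {i j : ℤ} (hi : i ∈ T.support)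
    (hij : i ≤ j) : φ ^ (j - i - (2 * chips T - 2) : ℤ) ≤ |eval ψ j T| + chips T := by
  set L := T.filter (· ≤ j)
  set R := T.filter (¬ · ≤ j)
  have T_eq : L + R = T := filter_add_filter_not T (· ≤ j)
  have hiL : i ∈ L.support := by simp_all [L]
  have chips_eq : chips L + chips R = chips T := by rw [← chips_add, T_eq]
  have chips_L_pos : 1 ≤ chips L := chips_pos (by intro hL; simp [hL] at hiL)
  have abs_eval_R : |eval ψ j R| ≤ chips R := by
    refine abs_eval_le_chips ?_ fun k hk => ?_
    · exact abs_le.2 ⟨neg_one_lt_goldenConj.le, goldenConj_neg.le.trans zero_le_one⟩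
    · simp only [R, support_filter, Finset.mem_filter] at hk
      exact (not_le.1 hk.2).le
  have chips_le : (1 + chips R : ℝ) ≤ chips T := mod_cast by omega
  calc φ ^ (j - i - (2 * chips T - 2) : ℤ) ≤ φ ^ (j - i - (2 * chips L - 2) : ℤ) :=
        zpow_le_zpow_right₀ one_lt_goldenRatio.le (by omega)
    _ ≤ 1 + |eval ψ j L| :=
        zpow_le_one_add_abs_eval_goldenConj hiL fun k hk => by simp_all [L]
    _ ≤ 1 + (|eval ψ j T| + |eval ψ j R|) := by
        rw [← T_eq, eval_add]
        gcongr
        simpa using abs_sub (eval ψ j L + eval ψ j R) (eval ψ j R)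
    _ ≤ |eval ψ j T| + chips T := by linarith

theorem sub_le_two_mul_chips_sub_two_add_logb {T : BState} {i : ℤ} (hi : i ∈ T.support) (j : ℤ) :
    (j - i : ℝ) ≤ 2 * chips T - 2 + logb φ (|eval ψ j T| + chips T) := by
  have one_le_chips : (1 : ℝ) ≤ chips T :=
    mod_cast chips_pos (by rintro rfl; simp at hi)
  have one_le : 1 ≤ |eval ψ j T| + chips T := by linarith [abs_nonneg (eval ψ j T)]
  rcases le_total i j with hij | hji
  · have := zpow_le_abs_eval_goldenConj_add_chips hi hij
    rw [← rpow_intCast, ← le_logb_iff_rpow_le one_lt_goldenRatio (by linarith)] at this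
    push_cast at this
    linarith
  · have : (j : ℝ) ≤ i := mod_cast hji
    linarith [logb_nonneg one_lt_goldenRatio one_le]

end BState

open BState

theorem SplitAt.exists_eq_add {S T : BState} {i : ℤ} (h : SplitAt S T i) :
    ∃ R : BState, S = R + single i 2 ∧ T = R + single (i + 1) 1 + single (i - 2) 1 :=
  ⟨S - single i 2, (tsub_add_cancel_of_le (single_le_iff.2 h.1)).symm, h.2⟩

theorem CombineAt.exists_eq_add {S T : BState} {i : ℤ} (h : CombineAt S T i) :
    ∃ R : BState, S = R + single (i + 1) 1 + single i 1 ∧ T = R + single (i + 2) 1 := by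
  obtain ⟨one_le, one_le_succ, T_eq⟩ := h
  refine ⟨S - single i 1 - single (i + 1) 1, ?_, T_eq⟩
  rw [tsub_add_cancel_of_le (single_le_iff.2 (by simpa using one_le_succ)),
    tsub_add_cancel_of_le (single_le_iff.2 one_le)]

theorem Move.eval_eq {S T : BState} (h : Move S T) {β : ℝ} (hβ : β ^ 2 = β + 1) (j : ℤ) :
    eval β j T = eval β j S := by
  have β_ne_zero : β ≠ 0 := by rintro rfl; simp at hβ
  have combine (k : ℤ) : β ^ k + β ^ (k + 1) = β ^ (k + 2) := by
    rw [zpow_add₀ β_ne_zero k 2, zpow_add_one₀ β_ne_zero, zpow_ofNat]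
    linear_combination -β ^ k * hβ
  have split (k : ℤ) : 2 * β ^ k = β ^ (k + 1) + β ^ (k - 2) := by
    have h₁ := combine (k - 2)
    have h₂ := combine (k - 1)
    ring_nf at h₁ h₂ ⊢
    linarith
  rcases h with ⟨i, hsplit⟩ | ⟨i, hcombine⟩
  · obtain ⟨R, rfl, rfl⟩ := hsplit.exists_eq_add
    have := split (i - j)
    simp only [eval_add, eval_single, Nat.cast_one, Nat.cast_ofNat, one_mul, add_sub_right_comm,
      sub_right_comm _ (2 : ℤ)]
    linarith
  · obtain ⟨R, rfl, rfl⟩ := hcombine.exists_eq_add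
    have := combine (i - j)
    simp only [eval_add, eval_single, Nat.cast_one, one_mul, add_sub_right_comm]
    linarith

theorem Move.chips_le {S T : BState} (h : Move S T) : chips T ≤ chips S := by
  rcases h with ⟨i, hsplit⟩ | ⟨i, hcombine⟩
  · obtain ⟨R, rfl, rfl⟩ := hsplit.exists_eq_add
    simp only [chips_add, chips_single]
    omega
  · obtain ⟨R, rfl, rfl⟩ := hcombine.exists_eq_add
    simp only [chips_add, chips_single]
    omega

theorem Reachable.eval_eq {S T : BState} (h : Reachable S T) {β : ℝ} (hβ : β ^ 2 = β + 1)
    (j : ℤ) : eval β j T = eval β j S := by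
  induction h with
  | refl => rfl
  | tail _ move ih => rw [move.eval_eq hβ, ih]

theorem Reachable.chips_le {S T : BState} (h : Reachable S T) : chips T ≤ chips S := by
  induction h with
  | refl => rfl
  | tail _ move ih => exact move.chips_le.trans ih

theorem logphi_eq_logb_goldenRatio (x : ℝ) : logphi x = logb φ x := rfl

theorem logphi_add_self_le {x : ℝ} (hx : 0 < x) : logphi (x + x) ≤ logphi x + 2 := by
  have add_self_le : x + x ≤ x * φ ^ (2 : ℝ) := by
    rw [rpow_two, goldenRatio_sq]
    nlinarith [one_lt_goldenRatio]
  simp only [logphi_eq_logb_goldenRatio]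
  calc logb φ (x + x) ≤ logb φ (x * φ ^ (2 : ℝ)) :=
        logb_le_logb_of_le one_lt_goldenRatio (by positivity) add_self_le
    _ = logb φ x + 2 := by
        rw [logb_mul hx.ne' (by positivity), logb_rpow goldenRatio_pos one_lt_goldenRatio.ne']

theorem bergman_leftmost_lower_bound_general {S T : BState} (hT : Reachable S T) {i : ℤ}
    (hi : 1 ≤ T i) (j : ℤ) :
    (j - i : ℝ) ≤ 2 * chips S - 2 + logphi (|eval ψ j S| + chips S) := by
  have i_mem : i ∈ T.support := mem_support_iff.2 (by omega)
  have chips_T_pos : (0 : ℝ) < chips T := mod_cast chips_pos (by rintro rfl; simp at hi)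
  have chips_le : (chips T : ℝ) ≤ chips S := mod_cast hT.chips_le
  calc (j - i : ℝ) ≤ 2 * chips T - 2 + logb φ (|eval ψ j T| + chips T) :=
        sub_le_two_mul_chips_sub_two_add_logb i_mem j
    _ ≤ 2 * chips S - 2 + logb φ (|eval ψ j S| + chips S) := by
        rw [hT.eval_eq goldenConj_sq]
        gcongr
        exact one_lt_goldenRatio
    _ = 2 * chips S - 2 + logphi (|eval ψ j S| + chips S) := by rw [logphi_eq_logb_goldenRatio]

/-- In any state reachable from `₀(n)`, every chip lies at an index at least
`−(2n + log_φ n + 2)`. -/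
theorem bergman_leftmost_lower_bound (n : ℕ) (hn : 1 ≤ n)
    (T : BState) (hT : Reachable (initState n) T)
    (i : ℤ) (hi : 1 ≤ T i) :
    -(2 * (n : ℝ) + logphi n + 2) ≤ (i : ℝ) := by
  have bound := bergman_leftmost_lower_bound_general hT hi 0
  have log_le := logphi_add_self_le (x := n) (mod_cast hn)
  simp only [initState, chips_single, eval_single, sub_self, zpow_zero, mul_one, Nat.abs_cast,
    Int.cast_zero, zero_sub] at bound
  linarith
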